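/- arXiv:1011.4691 — 2 statements merged into one kernel-verified Lean document; each statement's English description precedes it below -/
import Mathlib

section
/- Let N ≥ 3, α ∈ ℝ and p > 0. The equation −Δu = |x|^α u^{−p} has a C² positive solution on ℝ^N \ {0} if and only if N + α + p(N−2) > 0 and α < −2. Moreover, when these two conditions hold, the function ξ(x) = C |x|^{(2+α)/(1+p)}, where C = [ (1+p)² / ( (−(α+2)) · (N + α + p(N−2)) ) ]^{1/(1+p)}, is a C² positive solution of the equation, and it is the minimal solution: ξ ≤ u on ℝ^N \ {0} for every C² positive solution u. -/
open Metric Set MeasureTheory Filter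

noncomputable def laplacian {N : ℕ} (u : EuclideanSpace ℝ (Fin N) → ℝ)
    (x : EuclideanSpace ℝ (Fin N)) : ℝ :=
  ∑ i, iteratedFDeriv ℝ 2 u x ![EuclideanSpace.single i 1, EuclideanSpace.single i 1]

/-- A `C²` positive solution of `-Δu = φ(|x|) u^{-p}` on `ℝ^N \ {0}`. -/
def IsSol {N : ℕ} (φ : ℝ → ℝ) (p : ℝ) (u : EuclideanSpace ℝ (Fin N) → ℝ) : Prop :=
  ContDiffOn ℝ 2 u {(0 : EuclideanSpace ℝ (Fin N))}ᶜ ∧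
    ∀ x : EuclideanSpace ℝ (Fin N), x ≠ 0 →
      0 < u x ∧ -laplacian u x = φ ‖x‖ * u x ^ (-p)

/-! For `2 - N < τ < 0` the function `c|x|^τ - A - B|x|^(2-N)` is positive only inside a compact
subset of `ℝ^N \ {0}` and has the same Laplacian as `c|x|^τ`. As `u^{-p}` decreases in `u`, the
maximum principle puts this function below every positive supersolution as soon as
`c^(1+p) (-τ(τ+N-2)) < 1` and the weight dominates `|x|^(τ(1+p)-2)` where the function is positive.
At the roots `τ = 0` and `τ = 2 - N` of `τ(τ+N-2)` the constant `c` is unrestricted: letting `τ`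
tend to a root and then `c → ∞` would make `u` infinite, which excludes `α ≥ -2` and
`N + α + p(N-2) ≤ 0` respectively. For `τ = (2+α)/(1+p)` every `c < C` is allowed, and letting
`c → C` and `A, B → 0` gives the minimality of `C|x|^τ`. -/

open Module
open scoped Topology Laplacian

section SecondDerivativeTest

lemma deriv_deriv_nonneg_of_isLocalMin {g : ℝ → ℝ} {t : ℝ} (hg : ContinuousAt g t)
    (hmin : IsLocalMin g t) : 0 ≤ deriv (deriv g) t := by
  by_contra! hneg
  have hmax : IsLocalMax g t := isLocalMax_of_deriv_deriv_neg hneg hmin.deriv_eq_zero hg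
  have hconst : g =ᶠ[𝓝 t] fun _ ↦ g t := by
    filter_upwards [hmin, hmax] with s hge hle using le_antisymm hle hge
  have hzero : deriv (deriv g) t = 0 := by simpa using hconst.deriv.deriv_eq
  exact hneg.ne hzero

variable {E : Type*} [NormedAddCommGroup E] [NormedSpace ℝ E] {f : E → ℝ} {x : E}

lemma deriv_deriv_add_smul (hf : ContDiffAt ℝ 2 f x) (v : E) :
    deriv (deriv fun t : ℝ ↦ f (x + t • v)) 0 = iteratedFDeriv ℝ 2 f x fun _ ↦ v := by
  have hx : x + (0 : ℝ) • v = x := by simp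
  have hline : Tendsto (fun t : ℝ ↦ x + t • v) (𝓝 0) (𝓝 x) :=
    (by fun_prop : Continuous fun t : ℝ ↦ x + t • v).tendsto' _ _ hx
  have hfirst : (deriv fun t : ℝ ↦ f (x + t • v)) =ᶠ[𝓝 0]
      fun t ↦ iteratedFDeriv ℝ 1 f (x + t • v) fun _ ↦ v := by
    filter_upwards [hline.eventually (hf.eventually (by simp))] with t ht
    rw [(ht.differentiableAt two_ne_zero).deriv_comp_add_smul, iteratedFDeriv_one_apply]
  rw [hfirst.deriv_eq,
    ContDiffAt.deriv_fderiv_add_smul (by simpa [one_add_one_eq_two] using hf), hx]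

lemma iteratedFDeriv_two_nonneg_of_isLocalMin (hf : ContDiffAt ℝ 2 f x) (hmin : IsLocalMin f x)
    (v : E) : 0 ≤ iteratedFDeriv ℝ 2 f x fun _ ↦ v := by
  have hx : x + (0 : ℝ) • v = x := by simp
  have hline : ContinuousAt (fun t : ℝ ↦ x + t • v) 0 := by fun_prop
  rw [← deriv_deriv_add_smul hf]
  rw [← hx] at hf hmin
  exact deriv_deriv_nonneg_of_isLocalMin (hf.continuousAt.comp (f := fun t : ℝ ↦ x + t • v) hline)
    (IsMinFilter.comp_tendsto hmin hline.tendsto)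

end SecondDerivativeTest

section MaximumPrinciple

variable {E : Type*} [NormedAddCommGroup E] [InnerProductSpace ℝ E] [FiniteDimensional ℝ E]

lemma laplacian_nonneg_of_isLocalMin {f : E → ℝ} {x : E} (hf : ContDiffAt ℝ 2 f x)
    (hmin : IsLocalMin f x) : 0 ≤ Δ f x := by
  rw [InnerProductSpace.laplacian_eq_iteratedFDeriv_stdOrthonormalBasis]
  refine Finset.sum_nonneg fun i _ ↦ ?_
  rw [Matrix.vec_single_eq_const, Matrix.vecCons_const]
  exact iteratedFDeriv_two_nonneg_of_isLocalMin hf hmin _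

theorem le_of_laplacian_lt {s K : Set E} {u v : E → ℝ} (hs : IsOpen s) (hK : IsCompact K)
    (hKs : K ⊆ s) (hu : ContDiffOn ℝ 2 u s) (hv : ContDiffOn ℝ 2 v s)
    (hle : ∀ x ∈ s \ K, v x ≤ u x) (hlt : ∀ x ∈ s, u x < v x → Δ u x < Δ v x) :
    ∀ x ∈ s, v x ≤ u x := by
  by_contra! ⟨x, hx, hux⟩
  have hmem {z : E} (hz : z ∈ s) (hneg : u z < v z) : z ∈ K :=
    by_contra fun h ↦ hneg.not_ge (hle z ⟨hz, h⟩)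
  obtain ⟨y, hyK, hymin⟩ := hK.exists_isMinOn ⟨x, hmem hx hux⟩
    ((hu.sub hv).continuousOn.mono hKs)
  have hyneg : u y < v y := sub_neg.1 ((hymin (hmem hx hux)).trans_lt (sub_neg.2 hux))
  have hsy : s ∈ 𝓝 y := hs.mem_nhds (hKs hyK)
  have hlocal : IsLocalMin (u - v) y := by
    filter_upwards [hsy] with z hz
    rcases lt_or_ge (u z) (v z) with hneg | hpos
    · exact hymin (hmem hz hneg)
    · exact (sub_neg.2 hyneg).le.trans (sub_nonneg.2 hpos)
  have huy := hu.contDiffAt hsy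
  have hvy := hv.contDiffAt hsy
  have hnonneg : 0 ≤ Δ (u - v) y := laplacian_nonneg_of_isLocalMin (huy.sub hvy) hlocal
  rw [huy.laplacian_sub hvy, sub_nonneg] at hnonneg
  exact (hlt y (hKs hyK) hyneg).not_ge hnonneg

end MaximumPrinciple

section RadialFunctions

variable {E : Type*} [NormedAddCommGroup E] [InnerProductSpace ℝ E] {g : ℝ → ℝ} {x : E}

lemma hasFDerivAt_comp_norm_sq {g' : ℝ} (hg : HasDerivAt g g' (‖x‖ ^ 2)) :
    HasFDerivAt (fun y ↦ g (‖y‖ ^ 2)) ((2 * g') • innerSL ℝ x) x := by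
  refine (hg.comp_hasFDerivAt x (hasStrictFDerivAt_norm_sq x).hasFDerivAt).congr_fderiv ?_
  module

lemma iteratedFDeriv_two_comp_norm_sq (hg : ContDiffAt ℝ 2 g (‖x‖ ^ 2)) (v : E) :
    iteratedFDeriv ℝ 2 (fun y ↦ g (‖y‖ ^ 2)) x ![v, v]
      = 4 * deriv (deriv g) (‖x‖ ^ 2) * inner ℝ v x ^ 2 + 2 * deriv g (‖x‖ ^ 2) * ‖v‖ ^ 2 := by
  have hfirst : fderiv ℝ (fun y ↦ g (‖y‖ ^ 2)) =ᶠ[𝓝 x]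
      fun y ↦ (2 * deriv g (‖y‖ ^ 2)) • innerSL ℝ y := by
    have hcont : ContinuousAt (fun y : E ↦ ‖y‖ ^ 2) x := by fun_prop
    filter_upwards [hcont.tendsto.eventually (hg.eventually (by simp))] with y hy
    exact (hasFDerivAt_comp_norm_sq (hy.differentiableAt two_ne_zero).hasDerivAt).fderiv
  have hg' : HasDerivAt (deriv g) (deriv (deriv g) (‖x‖ ^ 2)) (‖x‖ ^ 2) :=
    ((hg.derivWithin (m := 1) le_rfl).differentiableAt one_ne_zero).hasDerivAt
  -- Here `innerSL ℝ` is typed as linear, so `innerSL_apply_apply`, which has it conjugate-linear,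
  -- does not fire.
  have hinner (y w : E) : (innerSL ℝ : E →L[ℝ] E →L[ℝ] ℝ) y w = inner ℝ y w := rfl
  have hsecond := ((hasFDerivAt_comp_norm_sq hg').const_mul 2).fun_smul
    (innerSL ℝ (E := E)).hasFDerivAt
  rw [iteratedFDeriv_two_apply, hfirst.fderiv_eq, hsecond.fderiv]
  simp only [Fin.isValue, Matrix.cons_val_zero, Matrix.cons_val_one, Matrix.cons_val_fin_one,
    add_apply, smul_apply, ContinuousLinearMap.smulRight_apply, smul_eq_mul, hinner,
    real_inner_self_eq_norm_sq, real_inner_comm v x]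
  ring

theorem laplacian_comp_norm_sq [FiniteDimensional ℝ E] (hg : ContDiffAt ℝ 2 g (‖x‖ ^ 2)) :
    Δ (fun y : E ↦ g (‖y‖ ^ 2)) x
      = 4 * deriv (deriv g) (‖x‖ ^ 2) * ‖x‖ ^ 2 + 2 * finrank ℝ E * deriv g (‖x‖ ^ 2) := by
  rw [InnerProductSpace.laplacian_eq_iteratedFDeriv_stdOrthonormalBasis]
  simp only [iteratedFDeriv_two_comp_norm_sq hg, Finset.sum_add_distrib, ← Finset.mul_sum,
    OrthonormalBasis.sum_sq_inner_right, OrthonormalBasis.norm_eq_one, one_pow, Finset.sum_const,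
    Finset.card_univ, Fintype.card_fin, nsmul_eq_mul]
  ring

lemma contDiffAt_norm_rpow {n : WithTop ℕ∞} (hx : x ≠ 0) (s : ℝ) :
    ContDiffAt ℝ n (fun y : E ↦ ‖y‖ ^ s) x :=
  (contDiffAt_norm ℝ hx).rpow_const_of_ne (norm_ne_zero_iff.2 hx)

lemma laplacian_norm_rpow [FiniteDimensional ℝ E] (hx : x ≠ 0) (s : ℝ) :
    Δ (fun y : E ↦ ‖y‖ ^ s) x = s * (s + finrank ℝ E - 2) * ‖x‖ ^ (s - 2) := by
  have hr : 0 < ‖x‖ ^ 2 := by positivity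
  have hsq (a : ℝ) (y : E) : ‖y‖ ^ a = (‖y‖ ^ 2) ^ (a / 2) := by
    rw [← Real.rpow_natCast_mul (norm_nonneg y)]
    congr 1; push_cast; ring
  have hstep : (‖x‖ ^ 2) ^ (s / 2 - 1 - 1) * ‖x‖ ^ 2 = (‖x‖ ^ 2) ^ (s / 2 - 1) := by
    rw [← Real.rpow_add_one hr.ne', sub_add_cancel]
  simp only [hsq s]
  rw [laplacian_comp_norm_sq (Real.contDiffAt_rpow_const_of_ne hr.ne'), Real.deriv_rpow_const',
    deriv_const_mul_field, Real.deriv_rpow_const, hsq, sub_div, div_self two_ne_zero]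
  simp only [← hstep]
  ring

end RadialFunctions

section Barriers

variable {E : Type*} [NormedAddCommGroup E] [InnerProductSpace ℝ E] {x : E}
  {c τ A B : ℝ}

lemma contDiffAt_const_mul_norm_rpow {n : WithTop ℕ∞} (hx : x ≠ 0) (c s : ℝ) :
    ContDiffAt ℝ n (fun y : E ↦ c * ‖y‖ ^ s) x :=
  contDiffAt_const.mul (contDiffAt_norm_rpow hx s)

lemma laplacian_const_mul_norm_rpow [FiniteDimensional ℝ E] (hx : x ≠ 0) (c s : ℝ) :
    Δ (fun y : E ↦ c * ‖y‖ ^ s) x = c * (s * (s + finrank ℝ E - 2)) * ‖x‖ ^ (s - 2) := by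
  have hsmul : Δ (c • fun y : E ↦ ‖y‖ ^ s) x = c • Δ (fun y : E ↦ ‖y‖ ^ s) x :=
    InnerProductSpace.laplacian_smul c (contDiffAt_norm_rpow hx s)
  rw [show (fun y : E ↦ c * ‖y‖ ^ s) = c • fun y : E ↦ ‖y‖ ^ s from rfl, hsmul,
    laplacian_norm_rpow hx, smul_eq_mul]
  ring

lemma neg_laplacian_const_mul_norm_rpow [FiniteDimensional ℝ E] (hc : 0 < c) (hx : x ≠ 0)
    (τ p : ℝ) :
    -Δ (fun y : E ↦ c * ‖y‖ ^ τ) x = c ^ (1 + p) * (-τ * (τ + finrank ℝ E - 2)) *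
      (‖x‖ ^ (τ * (1 + p) - 2) * (c * ‖x‖ ^ τ) ^ (-p)) := by
  have hr : 0 < ‖x‖ := norm_pos_iff.2 hx
  have hconst : c = c ^ (1 + p) * c ^ (-p) := by
    rw [← Real.rpow_add hc, add_neg_cancel_right, Real.rpow_one]
  have hpow : ‖x‖ ^ (τ - 2) = ‖x‖ ^ (τ * (1 + p) - 2) * ‖x‖ ^ (τ * -p) := by
    rw [← Real.rpow_add hr]
    ring_nf
  rw [laplacian_const_mul_norm_rpow hx, hpow, Real.mul_rpow hc.le (by positivity),
    ← Real.rpow_mul hr.le]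
  nth_rw 1 [hconst]
  ring

/-- The comparison function `c‖x‖^τ - A - B‖x‖^(2-d)` on a space of dimension `d`. -/
noncomputable def barrier (c τ A B : ℝ) (x : E) : ℝ :=
  c * ‖x‖ ^ τ - (A + B * ‖x‖ ^ (2 - finrank ℝ E : ℝ))

lemma contDiffAt_barrier {n : WithTop ℕ∞} (hx : x ≠ 0) (c τ A B : ℝ) :
    ContDiffAt ℝ n (barrier (E := E) c τ A B) x :=
  (contDiffAt_const_mul_norm_rpow hx c τ).sub
    (contDiffAt_const.add (contDiffAt_const_mul_norm_rpow hx B _))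

variable [FiniteDimensional ℝ E]

lemma laplacian_barrier (hx : x ≠ 0) (c τ A B : ℝ) :
    Δ (barrier (E := E) c τ A B) x = Δ (fun y : E ↦ c * ‖y‖ ^ τ) x := by
  have hpow (c s : ℝ) : ContDiffAt ℝ 2 (fun y : E ↦ c * ‖y‖ ^ s) x :=
    contDiffAt_const_mul_norm_rpow hx c s
  have hharm : Δ (fun y : E ↦ A + B * ‖y‖ ^ (2 - finrank ℝ E : ℝ)) x = 0 := by
    refine (contDiffAt_const.laplacian_add (hpow B _)).trans ?_
    rw [laplacian_const_mul_norm_rpow hx]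
    simp
  exact ((hpow c τ).laplacian_sub (contDiffAt_const.add (hpow B _))).trans (by rw [hharm, sub_zero])

lemma exists_isCompact_barrier_nonpos (hτ : τ ∈ Ioo (2 - finrank ℝ E : ℝ) 0) (hA : 0 < A)
    (hB : 0 < B) (c : ℝ) :
    ∃ K : Set E, IsCompact K ∧ K ⊆ {0}ᶜ ∧ ∀ x ∈ {0}ᶜ \ K, barrier c τ A B x ≤ 0 := by
  have hzero : Tendsto (fun r : ℝ ↦ c * r ^ (τ - (2 - finrank ℝ E))) (𝓝[>] 0) (𝓝 0) := by
    have hcont : ContinuousAt (fun r : ℝ ↦ c * r ^ (τ - (2 - finrank ℝ E))) 0 :=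
      continuousAt_const.mul (Real.continuousAt_rpow_const _ _ (.inr (sub_pos.2 hτ.1).le))
    simpa [Real.zero_rpow (sub_pos.2 hτ.1).ne'] using hcont.tendsto.mono_left nhdsWithin_le_nhds
  have htop : Tendsto (fun r : ℝ ↦ c * r ^ τ) atTop (𝓝 0) := by
    simpa using (tendsto_rpow_neg_atTop (neg_pos.2 hτ.2)).const_mul c
  obtain ⟨a, ha, hnear⟩ := (nhdsGT_basis (0 : ℝ)).eventually_iff.1 (hzero.eventually_lt_const hB)
  obtain ⟨b, hfar⟩ := eventually_atTop.1 (htop.eventually_lt_const hA)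
  refine ⟨closedBall 0 b \ ball 0 a, (isCompact_closedBall 0 b).diff isOpen_ball, ?_, ?_⟩
  · rintro _ hx rfl
    exact hx.2 (mem_ball_self ha)
  rintro x ⟨hx, hxK⟩
  have hr : 0 < ‖x‖ := norm_pos_iff.2 hx
  have hBpos : 0 < B * ‖x‖ ^ (2 - finrank ℝ E : ℝ) := by positivity
  refine sub_nonpos.2 ?_
  by_cases hxa : ‖x‖ < a
  · have hlt := mul_lt_mul_of_pos_right (hnear ⟨hr, hxa⟩)
      (Real.rpow_pos_of_pos hr (2 - finrank ℝ E : ℝ))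
    rw [mul_assoc, ← Real.rpow_add hr, sub_add_cancel] at hlt
    linarith
  · have hxb : b < ‖x‖ := by simpa [hxa] using hxK
    linarith [hfar ‖x‖ hxb.le]

end Barriers

section Supersolutions

variable {E : Type*} [NormedAddCommGroup E] [InnerProductSpace ℝ E] [FiniteDimensional ℝ E]
  {φ : ℝ → ℝ} {p c C s σ τ A B : ℝ} {u : E → ℝ}

/-- A `C²` positive supersolution of `-Δu = φ(‖x‖) u^{-p}` away from the origin. -/
def IsSupersol (φ : ℝ → ℝ) (p : ℝ) (u : E → ℝ) : Prop :=
  ContDiffOn ℝ 2 u {0}ᶜ ∧ ∀ x ≠ 0, 0 < u x ∧ φ ‖x‖ * u x ^ (-p) ≤ -Δ u x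

namespace IsSupersol

lemma barrier_le_of_mem_Ioo (hu : IsSupersol φ p u) (hp : 0 ≤ p)
    (hτ : τ ∈ Ioo (2 - finrank ℝ E : ℝ) 0) (hc : 0 < c) (hA : 0 < A) (hB : 0 < B)
    (hcτ : c ^ (1 + p) * (-τ * (τ + finrank ℝ E - 2)) < 1)
    (hφ : ∀ r > 0, A + B * r ^ (2 - finrank ℝ E : ℝ) < c * r ^ τ → r ^ (τ * (1 + p) - 2) ≤ φ r) :
    ∀ x ≠ 0, barrier c τ A B x ≤ u x := by
  obtain ⟨K, hK, hK0, hbK⟩ := exists_isCompact_barrier_nonpos (E := E) hτ hA hB c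
  refine le_of_laplacian_lt isOpen_compl_singleton hK hK0 hu.1
    (fun x hx ↦ (contDiffAt_barrier hx c τ A B).contDiffWithinAt)
    (fun x hx ↦ (hbK x hx).trans (hu.2 x hx.1).1.le) fun x hx hux ↦ ?_
  have hr : 0 < ‖x‖ := norm_pos_iff.2 hx
  obtain ⟨hupos, hsuper⟩ := hu.2 x hx
  have hweight : ‖x‖ ^ (τ * (1 + p) - 2) ≤ φ ‖x‖ := hφ _ hr (sub_pos.1 (hupos.trans hux))
  have hule : u x ≤ c * ‖x‖ ^ τ := hux.le.trans (sub_le_self _ (by positivity))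
  have hrhs : ‖x‖ ^ (τ * (1 + p) - 2) * (c * ‖x‖ ^ τ) ^ (-p) ≤ φ ‖x‖ * u x ^ (-p) :=
    mul_le_mul hweight (Real.rpow_le_rpow_of_nonpos hupos hule (neg_nonpos.2 hp))
      (by positivity) ((by positivity : 0 ≤ ‖x‖ ^ (τ * (1 + p) - 2)).trans hweight)
  refine neg_lt_neg_iff.1 ?_
  calc -Δ (barrier (E := E) c τ A B) x
      = c ^ (1 + p) * (-τ * (τ + finrank ℝ E - 2)) *
          (‖x‖ ^ (τ * (1 + p) - 2) * (c * ‖x‖ ^ τ) ^ (-p)) := by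
        rw [laplacian_barrier hx, neg_laplacian_const_mul_norm_rpow hc hx]
    _ < ‖x‖ ^ (τ * (1 + p) - 2) * (c * ‖x‖ ^ τ) ^ (-p) :=
        mul_lt_of_lt_one_left (by positivity) hcτ
    _ ≤ φ ‖x‖ * u x ^ (-p) := hrhs
    _ ≤ -Δ u x := hsuper

lemma barrier_le_of_mem_Icc (hu : IsSupersol φ p u) (hp : 0 ≤ p) (hE : 3 ≤ finrank ℝ E)
    (hσ : σ ∈ Icc (2 - finrank ℝ E : ℝ) 0) (hc : 0 < c) (hA : 0 < A) (hB : 0 < B)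
    (hcσ : c ^ (1 + p) * (-σ * (σ + finrank ℝ E - 2)) < 1)
    (hφ : ∀ τ ∈ Ioo (2 - finrank ℝ E : ℝ) 0, ∀ r > 0,
      A + B * r ^ (2 - finrank ℝ E : ℝ) < c * r ^ τ → r ^ (τ * (1 + p) - 2) ≤ φ r) :
    ∀ x ≠ 0, barrier c σ A B x ≤ u x := by
  intro x hx
  have hE' : (3 : ℝ) ≤ finrank ℝ E := by exact_mod_cast hE
  have : (𝓝[Ioo (2 - finrank ℝ E : ℝ) 0] σ).NeBot := by
    rw [← mem_closure_iff_nhdsWithin_neBot, closure_Ioo (by linarith)]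
    exact hσ
  have hlim : Tendsto (fun τ ↦ barrier c τ A B x) (𝓝[Ioo (2 - finrank ℝ E : ℝ) 0] σ)
      (𝓝 (barrier c σ A B x)) := by
    have hcont : Continuous fun τ ↦ barrier c τ A B x :=
      ((Real.continuous_const_rpow (norm_ne_zero_iff.2 hx)).const_mul c).sub continuous_const
    exact hcont.continuousWithinAt
  have hconst : ∀ᶠ τ in 𝓝[Ioo (2 - finrank ℝ E : ℝ) 0] σ,
      c ^ (1 + p) * (-τ * (τ + finrank ℝ E - 2)) < 1 := by
    have hcont : Continuous fun τ : ℝ ↦ c ^ (1 + p) * (-τ * (τ + finrank ℝ E - 2)) := by fun_prop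
    exact nhdsWithin_le_nhds (hcont.continuousAt.eventually_lt_const hcσ)
  refine le_of_tendsto hlim ?_
  filter_upwards [hconst, self_mem_nhdsWithin] with τ hcτ hτ
  exact hu.barrier_le_of_mem_Ioo hp hτ hc hA hB hcτ (hφ τ hτ) x hx

theorem const_mul_norm_rpow_le (hu : IsSupersol φ p u) (hp : 0 ≤ p)
    (hs : s ∈ Ioo (2 - finrank ℝ E : ℝ) 0) (hC : 0 < C)
    (hCs : C ^ (1 + p) * (-s * (s + finrank ℝ E - 2)) ≤ 1)
    (hφ : ∀ r > 0, r ^ (s * (1 + p) - 2) ≤ φ r) : ∀ x ≠ 0, C * ‖x‖ ^ s ≤ u x := by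
  intro x hx
  have hscaled : ∀ t ∈ Ioo (0 : ℝ) 1, barrier (t * C) s (1 - t) (1 - t) x ≤ u x := by
    intro t ⟨ht0, ht1⟩
    have hsub : (t * C) ^ (1 + p) * (-s * (s + finrank ℝ E - 2)) < 1 := by
      rw [Real.mul_rpow ht0.le hC.le, mul_assoc]
      exact mul_lt_one_of_nonneg_of_lt_one_left (by positivity)
        (Real.rpow_lt_one ht0.le ht1 (by linarith)) hCs
    exact hu.barrier_le_of_mem_Ioo hp hs (by positivity) (sub_pos.2 ht1) (sub_pos.2 ht1) hsub
      (fun r hr _ ↦ hφ r hr) x hx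
  have hlim : Tendsto (fun t ↦ barrier (t * C) s (1 - t) (1 - t) x) (𝓝[<] 1)
      (𝓝 (C * ‖x‖ ^ s)) := by
    have hcont : Continuous fun t ↦ barrier (t * C) s (1 - t) (1 - t) x := by
      unfold barrier
      fun_prop
    exact (hcont.tendsto' 1 _ (by simp [barrier])).mono_left nhdsWithin_le_nhds
  refine le_of_tendsto hlim ?_
  filter_upwards [Ioo_mem_nhdsLT zero_lt_one] with t ht using hscaled t ht

end IsSupersol

lemma not_forall_pos_mul_le {k : ℝ} (hk : 0 < k) (M : ℝ) : ¬∀ c > 0, c * k ≤ M := by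
  intro h
  have hM := h ((|M| + 1) / k) (by positivity)
  rw [div_mul_cancel₀ _ hk.ne'] at hM
  linarith [le_abs_self M]

theorem not_isSupersol_of_rpow_neg_two_le (hE : 3 ≤ finrank ℝ E) (hp : 0 ≤ p)
    (hφ : ∀ r ≥ 1, r ^ (-2 : ℝ) ≤ φ r) : ¬IsSupersol φ p u := by
  intro hu
  have hE' : (3 : ℝ) ≤ finrank ℝ E := by exact_mod_cast hE
  have : Nontrivial E := nontrivial_of_finrank_pos (R := ℝ) (by omega)
  have hbound : ∀ c > 0, ∀ x ≠ 0, barrier c 0 1 c x ≤ u x := by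
    intro c hc
    refine hu.barrier_le_of_mem_Icc hp hE ⟨by linarith, le_rfl⟩ hc one_pos hc (by simp) ?_
    intro τ hτ r hr hlt
    have hr1 : 1 ≤ r := by
      by_contra! hr1
      have hmono : r ^ τ ≤ r ^ (2 - finrank ℝ E : ℝ) :=
        Real.rpow_le_rpow_of_exponent_ge hr hr1.le hτ.1.le
      linarith [mul_le_mul_of_nonneg_left hmono hc.le]
    refine (Real.rpow_le_rpow_of_exponent_le hr1 ?_).trans (hφ r hr1)
    linarith [mul_nonpos_of_nonpos_of_nonneg hτ.2.le (by linarith : 0 ≤ 1 + p)]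
  obtain ⟨x, hx⟩ := exists_norm_eq E zero_le_two
  have hx0 : x ≠ 0 := norm_pos_iff.1 (hx ▸ two_pos)
  have hpow : (2 : ℝ) ^ (2 - finrank ℝ E : ℝ) < 1 :=
    Real.rpow_lt_one_of_one_lt_of_neg one_lt_two (by linarith)
  refine not_forall_pos_mul_le (sub_pos.2 hpow) (u x + 1) fun c hc ↦ ?_
  have hle := hbound c hc x hx0
  rw [barrier, hx, Real.rpow_zero] at hle
  linarith

theorem not_isSupersol_of_rpow_le (hE : 3 ≤ finrank ℝ E) (hp : 0 ≤ p)
    (hφ : ∀ r ∈ Ioc (0 : ℝ) 1, r ^ ((2 - finrank ℝ E) * (1 + p) - 2 : ℝ) ≤ φ r) :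
    ¬IsSupersol φ p u := by
  intro hu
  have hE' : (3 : ℝ) ≤ finrank ℝ E := by exact_mod_cast hE
  have : Nontrivial E := nontrivial_of_finrank_pos (R := ℝ) (by omega)
  have hbound : ∀ c > 0, ∀ x ≠ 0, barrier c (2 - finrank ℝ E) c 1 x ≤ u x := by
    intro c hc
    refine hu.barrier_le_of_mem_Icc hp hE ⟨le_rfl, by linarith⟩ hc hc one_pos (by simp) ?_
    intro τ hτ r hr hlt
    have hr1 : r ≤ 1 := by
      by_contra! hr1
      have hpow : r ^ τ ≤ 1 := Real.rpow_le_one_of_one_le_of_nonpos hr1.le hτ.2.le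
      have hpos : 0 < r ^ (2 - finrank ℝ E : ℝ) := Real.rpow_pos_of_pos hr _
      linarith [mul_le_mul_of_nonneg_left hpow hc.le]
    refine (Real.rpow_le_rpow_of_exponent_ge hr hr1 ?_).trans (hφ r ⟨hr, hr1⟩)
    linarith [mul_le_mul_of_nonneg_right hτ.1.le (by linarith : 0 ≤ 1 + p)]
  obtain ⟨x, hx⟩ := exists_norm_eq E (by norm_num : (0 : ℝ) ≤ 1 / 2)
  have hx0 : x ≠ 0 := norm_pos_iff.1 (hx ▸ one_half_pos)
  have hpow : 1 < (1 / 2 : ℝ) ^ (2 - finrank ℝ E : ℝ) :=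
    Real.one_lt_rpow_of_pos_of_lt_one_of_neg one_half_pos one_half_lt_one (by linarith)
  refine not_forall_pos_mul_le (sub_pos.2 hpow) (u x + (1 / 2) ^ (2 - finrank ℝ E : ℝ))
    fun c hc ↦ ?_
  have hle := hbound c hc x hx0
  rw [barrier, hx] at hle
  linarith

namespace IsSupersol

variable {α : ℝ}

lemma lt_neg_two_of_rpow_weight (hu : IsSupersol (fun r ↦ r ^ α) p u) (hE : 3 ≤ finrank ℝ E)
    (hp : 0 ≤ p) : α < -2 := by
  by_contra! hα
  exact not_isSupersol_of_rpow_neg_two_le hE hp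
    (fun r hr ↦ Real.rpow_le_rpow_of_exponent_le hr hα) hu

lemma add_add_mul_pos_of_rpow_weight (hu : IsSupersol (fun r ↦ r ^ α) p u) (hE : 3 ≤ finrank ℝ E)
    (hp : 0 ≤ p) : 0 < finrank ℝ E + α + p * (finrank ℝ E - 2) := by
  by_contra! hα
  exact not_isSupersol_of_rpow_le hE hp
    (fun r hr ↦ Real.rpow_le_rpow_of_exponent_ge hr.1 hr.2 (by linarith)) hu

end IsSupersol

end Supersolutions

section PowerWeight

variable {n α p : ℝ}

/-- The exponent `s` of the minimal solution `C‖x‖^s` of `-Δu = ‖x‖^α u^{-p}`. -/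
noncomputable def minimalExponent (α p : ℝ) : ℝ :=
  (2 + α) / (1 + p)

/-- The coefficient `C` of the minimal solution `C‖x‖^s` of `-Δu = ‖x‖^α u^{-p}` in
dimension `n`. -/
noncomputable def minimalCoeff (n α p : ℝ) : ℝ :=
  ((1 + p) ^ 2 / (-(α + 2) * (n + α + p * (n - 2)))) ^ (1 / (1 + p))

lemma minimalCoeff_pos (hp : -1 < p) (h : 0 < n + α + p * (n - 2)) (hα : α < -2) :
    0 < minimalCoeff n α p := by
  have hα' : 0 < -(α + 2) := by linarith
  have hp' : 0 < 1 + p := by linarith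
  unfold minimalCoeff
  positivity

lemma minimalExponent_mul_sub_two (hp : -1 < p) (α : ℝ) :
    minimalExponent α p * (1 + p) - 2 = α := by
  rw [minimalExponent, div_mul_cancel₀ _ (by linarith), add_sub_cancel_left]

lemma minimalExponent_add_sub_two (hp : -1 < p) (n α : ℝ) :
    minimalExponent α p + n - 2 = (n + α + p * (n - 2)) / (1 + p) := by
  have hp' : 1 + p ≠ 0 := by linarith
  unfold minimalExponent
  field_simp
  ring

lemma minimalExponent_mem_Ioo (hp : -1 < p) (h : 0 < n + α + p * (n - 2)) (hα : α < -2) :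
    minimalExponent α p ∈ Ioo (2 - n) 0 := by
  have hp' : 0 < 1 + p := by linarith
  refine ⟨?_, div_neg_of_neg_of_pos (by linarith) hp'⟩
  linarith [minimalExponent_add_sub_two hp n α, div_pos h hp']

lemma minimalCoeff_rpow_mul (hp : -1 < p) (h : 0 < n + α + p * (n - 2)) (hα : α < -2) :
    minimalCoeff n α p ^ (1 + p) * (-minimalExponent α p * (minimalExponent α p + n - 2)) = 1 := by
  have hα' : 0 < -(α + 2) := by linarith
  have hp' : 0 < 1 + p := by linarith
  rw [minimalCoeff, ← Real.rpow_mul (by positivity), one_div_mul_cancel hp'.ne', Real.rpow_one,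
    minimalExponent_add_sub_two hp]
  have hα0 : α + 2 ≠ 0 := by linarith
  unfold minimalExponent
  field_simp
  ring

end PowerWeight

section Euclidean

variable {N : ℕ} {φ : ℝ → ℝ} {p : ℝ} {u : EuclideanSpace ℝ (Fin N) → ℝ}

lemma laplacian_eq_laplacian (u : EuclideanSpace ℝ (Fin N) → ℝ) : laplacian u = Δ u := by
  rw [InnerProductSpace.laplacian_eq_iteratedFDeriv_orthonormalBasis u
    (EuclideanSpace.basisFun (Fin N) ℝ)]
  simp only [EuclideanSpace.basisFun_apply]
  rfl

lemma IsSol.isSupersol (hu : IsSol φ p u) : IsSupersol φ p u :=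
  ⟨hu.1, fun x hx ↦ ⟨(hu.2 x hx).1, laplacian_eq_laplacian u ▸ (hu.2 x hx).2.ge⟩⟩

lemma isSol_const_mul_norm_rpow {c s : ℝ} (hc : 0 < c)
    (hcs : c ^ (1 + p) * (-s * (s + N - 2)) = 1) :
    IsSol (fun r ↦ r ^ (s * (1 + p) - 2)) p fun x : EuclideanSpace ℝ (Fin N) ↦ c * ‖x‖ ^ s := by
  refine ⟨fun x hx ↦ (contDiffAt_const_mul_norm_rpow hx c s).contDiffWithinAt, fun x hx ↦ ?_⟩
  refine ⟨mul_pos hc (Real.rpow_pos_of_pos (norm_pos_iff.2 hx) s), ?_⟩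
  rw [laplacian_eq_laplacian, neg_laplacian_const_mul_norm_rpow hc hx s p,
    finrank_euclideanSpace_fin, hcs, one_mul]

end Euclidean

theorem statement_17_general {N : ℕ} (hN : 3 ≤ N) (α : ℝ) {p : ℝ} (hp : 0 ≤ p) :
    ((∃ u : EuclideanSpace ℝ (Fin N) → ℝ, IsSupersol (fun r ↦ r ^ α) p u) ↔
      0 < N + α + p * (N - 2) ∧ α < -2) ∧
    (0 < N + α + p * (N - 2) ∧ α < -2 →
      IsSol (fun r ↦ r ^ α) p (fun x : EuclideanSpace ℝ (Fin N) ↦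
        minimalCoeff N α p * ‖x‖ ^ minimalExponent α p) ∧
      ∀ u : EuclideanSpace ℝ (Fin N) → ℝ, IsSupersol (fun r ↦ r ^ α) p u →
        ∀ x ≠ 0, minimalCoeff N α p * ‖x‖ ^ minimalExponent α p ≤ u x) := by
  have hdim : finrank ℝ (EuclideanSpace ℝ (Fin N)) = N := finrank_euclideanSpace_fin
  have hp' : -1 < p := by linarith
  have hweight := minimalExponent_mul_sub_two hp' α
  have hsol (h : 0 < N + α + p * (N - 2)) (hα : α < -2) :
      IsSol (fun r ↦ r ^ α) p fun x : EuclideanSpace ℝ (Fin N) ↦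
        minimalCoeff N α p * ‖x‖ ^ minimalExponent α p := by
    simpa only [hweight] using
      isSol_const_mul_norm_rpow (minimalCoeff_pos hp' h hα) (minimalCoeff_rpow_mul hp' h hα)
  refine ⟨⟨fun ⟨u, hu⟩ ↦ ⟨?_, hu.lt_neg_two_of_rpow_weight (hN.trans_eq hdim.symm) hp⟩,
    fun ⟨h, hα⟩ ↦ ⟨_, (hsol h hα).isSupersol⟩⟩, fun ⟨h, hα⟩ ↦ ⟨hsol h hα, fun u hu ↦ ?_⟩⟩
  · simpa only [hdim] using hu.add_add_mul_pos_of_rpow_weight (hN.trans_eq hdim.symm) hp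
  · refine hu.const_mul_norm_rpow_le hp ?_ (minimalCoeff_pos hp' h hα) ?_ fun r _ ↦ ?_
    · simpa only [hdim] using minimalExponent_mem_Ioo hp' h hα
    · simpa only [hdim] using (minimalCoeff_rpow_mul hp' h hα).le
    · rw [hweight]

/-- Corollary 4.3: the pure power equation `-Δu = |x|^α u^{-p}` has solutions iff
`N + α + p(N-2) > 0` and `α < -2`, and then
`ξ(x) = C |x|^{(2+α)/(1+p)}` is the minimal solution. -/
theorem statement_17 {N : ℕ} (hN : 3 ≤ N) (α : ℝ) (p : ℝ) (hp : 0 < p) :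
    ((∃ u : EuclideanSpace ℝ (Fin N) → ℝ, IsSol (fun r => r ^ α) p u) ↔
      (0 < (N:ℝ) + α + p * ((N:ℝ) - 2) ∧ α < -2)) ∧
    ((0 < (N:ℝ) + α + p * ((N:ℝ) - 2) ∧ α < -2) →
      (IsSol (fun r => r ^ α) p
          (fun x : EuclideanSpace ℝ (Fin N) =>
            ((1 + p) ^ 2 / ((-(α + 2)) * ((N:ℝ) + α + p * ((N:ℝ) - 2)))) ^ (1 / (1 + p)) *
              ‖x‖ ^ ((2 + α) / (1 + p))) ∧
        ∀ u : EuclideanSpace ℝ (Fin N) → ℝ, IsSol (fun r => r ^ α) p u →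
          ∀ x : EuclideanSpace ℝ (Fin N), x ≠ 0 →
            ((1 + p) ^ 2 / ((-(α + 2)) * ((N:ℝ) + α + p * ((N:ℝ) - 2)))) ^ (1 / (1 + p)) *
              ‖x‖ ^ ((2 + α) / (1 + p)) ≤ u x)) := by
  have H := statement_17_general hN α hp.le
  exact ⟨⟨fun ⟨u, hu⟩ ↦ H.1.1 ⟨u, hu.isSupersol⟩, fun h ↦ ⟨_, (H.2 h).1⟩⟩,
    fun h ↦ ⟨(H.2 h).1, fun u hu ↦ (H.2 h).2 u hu.isSupersol⟩⟩
end

section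
/- Let N ≥ 3 and p > 0, and let φ : (0,∞) → (0,∞) be continuous with ∫₁^∞ r·φ(r) dr < ∞. Define D(r) = ∫_r^∞ t^{1−N} (∫₁^t s^{N−1} φ(s) ds) dt for r ≥ 1, and set u(x) = ((p+1) D(|x|))^{1/(p+1)} for |x| > 1. Then D(r) is finite and positive for every r ≥ 1, u is a twice continuously differentiable positive function on {x ∈ ℝ^N : |x| > 1} satisfying −Δu(x) ≥ φ(|x|) u(x)^{−p} for all |x| > 1, and u(x) → 0 as |x| → ∞. -/
/-!
Let `D` be the radial function `radialPotential`. Its flux `-D'` satisfies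
`(r ^ (N - 1) * (-D'))' = r ^ (N - 1) * φ`, which is `-ΔD = φ` in polar form. Since `N > 2`,
exchanging the order of integration gives `D(R) = (N - 2)⁻¹ * ∫ r in (R, ∞), r * φ r < ∞`.

The function `F(y) = ((p + 1) * y) ^ (1 / (p + 1))` solves `F' = F ^ (-p)` and is concave, so
`u = F(D)` satisfies `-Δu = F'(D) * φ - F''(D) * |∇D| ^ 2 ≥ φ * u ^ (-p)`.
-/

open Metric Set MeasureTheory Filter

open Module (finrank)
open scoped Topology Laplacian ContDiff

section Laplacian

variable {E : Type*} [NormedAddCommGroup E] [InnerProductSpace ℝ E]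

theorem norm_fderiv_norm_of_ne_zero {x : E} (hx : x ≠ 0) : ‖fderiv ℝ (fun y : E => ‖y‖) x‖ = 1 :=
  have := nontrivial_of_ne x 0 hx
  norm_fderiv_norm ((contDiffAt_norm ℝ hx (n := 1)).differentiableAt one_ne_zero)

variable [FiniteDimensional ℝ E]

theorem laplacian_eq_sum_fderiv_fderiv {ι : Type*} [Fintype ι] (b : OrthonormalBasis ι ℝ E)
    (f : E → ℝ) (x : E) : Δ f x = ∑ i, fderiv ℝ (fderiv ℝ f) x (b i) (b i) := by
  rw [InnerProductSpace.laplacian_eq_iteratedFDeriv_orthonormalBasis f b]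
  simp only [iteratedFDeriv_two_apply, Matrix.cons_val_zero, Matrix.cons_val_one]

theorem laplacian_comp {f : E → ℝ} {F F' : ℝ → ℝ} {F'' : ℝ} {x : E} (hf : ContDiffAt ℝ 2 f x)
    (hF : ∀ᶠ y in 𝓝 (f x), HasDerivAt F (F' y) y) (hF' : HasDerivAt F' F'' (f x)) :
    Δ (fun y => F (f y)) x = F' (f x) * Δ f x + F'' * ‖fderiv ℝ f x‖ ^ 2 := by
  have hfd : ∀ᶠ y in 𝓝 x, DifferentiableAt ℝ f y :=
    (hf.eventually (by simp)).mono fun y hy => hy.differentiableAt two_ne_zero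
  have fderiv_comp : fderiv ℝ (fun y => F (f y)) =ᶠ[𝓝 x] fun y => F' (f y) • fderiv ℝ f y := by
    filter_upwards [hfd, hf.continuousAt.eventually hF] with y hfy hFy
    exact (hFy.comp_hasFDerivAt y hfy.hasFDerivAt).fderiv
  have hfd' : HasFDerivAt (fderiv ℝ f) (fderiv ℝ (fderiv ℝ f) x) x :=
    ((hf.fderiv_right one_add_one_eq_two.le).differentiableAt one_ne_zero).hasFDerivAt
  have fderiv_fderiv_comp :=
    (((hF'.comp_hasFDerivAt x hfd.self_of_nhds.hasFDerivAt).smul hfd').congr_of_eventuallyEq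
      fderiv_comp).fderiv
  let b := stdOrthonormalBasis ℝ E
  have second_deriv (v : E) : fderiv ℝ (fderiv ℝ fun y => F (f y)) x v v =
      F' (f x) * fderiv ℝ (fderiv ℝ f) x v v + F'' * fderiv ℝ f x v ^ 2 := by
    rw [fderiv_fderiv_comp]
    simp only [Function.comp_apply, add_apply, smul_apply, ContinuousLinearMap.smulRight_apply,
      smul_eq_mul]
    ring
  simp only [laplacian_eq_sum_fderiv_fderiv b, second_deriv, b.norm_dual, Finset.sum_add_distrib,
    Finset.mul_sum]

theorem laplacian_norm_sq (x : E) : Δ (fun y : E => ‖y‖ ^ 2) x = 2 * finrank ℝ E := by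
  have fderiv_fderiv_norm_sq (v : E) :
      fderiv ℝ (fderiv ℝ fun y : E => ‖y‖ ^ 2) x v v = 2 * ‖v‖ ^ 2 := by
    rw [fderiv_norm_sq, fderiv_const_smul (innerSL ℝ).differentiableAt, (innerSL ℝ).fderiv,
      smul_apply, smul_apply, innerSL_apply_apply, real_inner_self_eq_norm_sq, nsmul_eq_mul,
      Nat.cast_ofNat]
  let b := stdOrthonormalBasis ℝ E
  simp [laplacian_eq_sum_fderiv_fderiv b, fderiv_fderiv_norm_sq, mul_comm]

theorem laplacian_norm {x : E} (hx : x ≠ 0) :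
    Δ (fun y : E => ‖y‖) x = (finrank ℝ E - 1) / ‖x‖ := by
  have chain_rule : Δ (fun y : E => ‖y‖ ^ 2) x =
      2 * ‖x‖ * Δ (fun y : E => ‖y‖) x + 2 * ‖fderiv ℝ (fun y : E => ‖y‖) x‖ ^ 2 :=
    laplacian_comp (F := fun r => r ^ 2) (F' := fun r => 2 * r) (contDiffAt_norm ℝ hx)
      (.of_forall fun r => by simpa using hasDerivAt_pow 2 r)
      (by simpa using (hasDerivAt_id ‖x‖).const_mul 2)
  rw [laplacian_norm_sq, norm_fderiv_norm_of_ne_zero hx] at chain_rule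
  rw [eq_div_iff (norm_ne_zero_iff.2 hx)]
  linarith

theorem laplacian_comp_norm {w w' : ℝ → ℝ} {w'' : ℝ} {x : E} (hx : x ≠ 0)
    (hw : ∀ᶠ r in 𝓝 ‖x‖, HasDerivAt w (w' r) r) (hw' : HasDerivAt w' w'' ‖x‖) :
    Δ (fun y : E => w ‖y‖) x = w'' + (finrank ℝ E - 1) / ‖x‖ * w' ‖x‖ := by
  rw [laplacian_comp (contDiffAt_norm ℝ hx) hw hw', laplacian_norm hx,
    norm_fderiv_norm_of_ne_zero hx]
  ring

end Laplacian

theorem contDiffOn_succ_of_hasDerivAt {𝕜 F : Type*} [NontriviallyNormedField 𝕜]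
    [NormedAddCommGroup F] [NormedSpace 𝕜 F] {f f' : 𝕜 → F} {s : Set 𝕜} {n : WithTop ℕ∞}
    (hn : n ≠ ω) (hs : IsOpen s) (hf : ∀ r ∈ s, HasDerivAt f (f' r) r)
    (hf' : ContDiffOn 𝕜 n f' s) : ContDiffOn 𝕜 (n + 1) f s :=
  (contDiffOn_succ_iff_deriv_of_isOpen hs).2
    ⟨fun r hr => (hf r hr).differentiableAt.differentiableWithinAt, fun h => absurd h hn,
      hf'.congr fun r hr => (hf r hr).deriv⟩

theorem hasDerivAt_integral_Ioi {F : Type*} [NormedAddCommGroup F] [NormedSpace ℝ F]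
    [CompleteSpace F] {f : ℝ → F} {R r : ℝ} (hf : IntegrableOn f (Ioi R))
    (hfcont : ContinuousOn f (Ioi R)) (hr : R < r) :
    HasDerivAt (fun a => ∫ t in Ioi a, f t) (-f r) r := by
  have deriv_primitive : HasDerivAt (fun a => ∫ t in R..a, f t) (f r) r :=
    intervalIntegral.integral_hasDerivAt_right
      ((intervalIntegrable_iff_integrableOn_Ioc_of_le hr.le).2 (hf.mono_set Ioc_subset_Ioi_self))
      (hfcont.stronglyMeasurableAtFilter isOpen_Ioi r hr) (hfcont.continuousAt (Ioi_mem_nhds hr))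
  refine (deriv_primitive.const_sub (∫ t in Ioi R, f t)).congr_of_eventuallyEq ?_
  filter_upwards [Ioi_mem_nhds hr] with a ha
  rw [← intervalIntegral.integral_Ioi_sub_Ioi hf (le_of_lt ha), sub_sub_cancel]

theorem integral_Ioi_pos {f : ℝ → ℝ} {r : ℝ} (hf : IntegrableOn f (Ioi r))
    (hfpos : ∀ t, r < t → 0 < f t) : 0 < ∫ t in Ioi r, f t := by
  have hsupport : Ioi r ⊆ Function.support f := fun t ht => (hfpos t ht).ne'
  rw [setIntegral_pos_iff_support_of_nonneg_ae ?_ hf, inter_eq_right.2 hsupport, Real.volume_Ioi]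
  · exact ENNReal.zero_lt_top
  · filter_upwards [ae_restrict_mem measurableSet_Ioi] with t ht using (hfpos t ht).le

/-- The flux `t ^ (1 - ν) * ∫ s in R..t, s ^ (ν - 1) * φ s` at radius `t` of a radial source of
density `φ` on `{R < |x|}`, in a space whose dimension `ν` is allowed to be any real number. -/
noncomputable def radialFlux (ν R : ℝ) (φ : ℝ → ℝ) (t : ℝ) : ℝ :=
  t ^ (1 - ν) * ∫ s in R..t, s ^ (ν - 1) * φ s

/-- The potential `D(r) = ∫ t in (r, ∞)` of `radialFlux ν R φ`: in dimension `ν`, it is the radial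
solution of `-ΔD = φ` on `{R < |x|}` that has zero flux at `R` and vanishes at infinity. -/
noncomputable def radialPotential (ν R : ℝ) (φ : ℝ → ℝ) (r : ℝ) : ℝ :=
  ∫ t in Ioi r, radialFlux ν R φ t

section RadialPotential

variable {ν R : ℝ} {φ : ℝ → ℝ}

theorem rpow_sub_two_mul_self_mul {s : ℝ} (hs : s ≠ 0) (y : ℝ) :
    s ^ (ν - 2) * (s * y) = s ^ (ν - 1) * y := by
  rw [← mul_assoc, ← Real.rpow_add_one hs]
  ring_nf

theorem intervalIntegrable_rpow_mul (hν : 2 ≤ ν) (hR : 0 ≤ R)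
    (hφ : IntegrableOn (fun s => s * φ s) (Ioi R)) {t : ℝ} (ht : R ≤ t) :
    IntervalIntegrable (fun s => s ^ (ν - 1) * φ s) volume R t := by
  have hφ' : IntervalIntegrable (fun s => s * φ s) volume R t :=
    (intervalIntegrable_iff_integrableOn_Ioc_of_le ht).2 (hφ.mono_set Ioc_subset_Ioi_self)
  refine (hφ'.continuousOn_mul
    (Real.continuous_rpow_const (sub_nonneg.2 hν)).continuousOn).congr fun s hs => ?_
  have hs0 : 0 < s := hR.trans_lt (uIoc_of_le ht ▸ hs).1
  exact rpow_sub_two_mul_self_mul hs0.ne' (φ s)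

theorem continuousOn_rpow_mul (hR : 0 ≤ R) (hφ : ContinuousOn φ (Ioi R)) :
    ContinuousOn (fun s => s ^ (ν - 1) * φ s) (Ioi R) :=
  (continuousOn_id.rpow_const fun _ hs => .inl (hR.trans_lt hs).ne').mul hφ

theorem hasDerivAt_radialFlux (hν : 2 ≤ ν) (hR : 0 ≤ R) (hφcont : ContinuousOn φ (Ioi R))
    (hφint : IntegrableOn (fun s => s * φ s) (Ioi R)) {t : ℝ} (ht : R < t) :
    HasDerivAt (radialFlux ν R φ) (φ t - (ν - 1) / t * radialFlux ν R φ t) t := by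
  have ht0 : 0 < t := hR.trans_lt ht
  have hcont : ContinuousOn (fun s => s ^ (ν - 1) * φ s) (Ioi R) := continuousOn_rpow_mul hR hφcont
  have deriv_primitive :
      HasDerivAt (fun t => ∫ s in R..t, s ^ (ν - 1) * φ s) (t ^ (ν - 1) * φ t) t :=
    intervalIntegral.integral_hasDerivAt_right (intervalIntegrable_rpow_mul hν hR hφint ht.le)
      (hcont.stronglyMeasurableAtFilter isOpen_Ioi t ht) (hcont.continuousAt (Ioi_mem_nhds ht))
  have rpow_cancel : t ^ (1 - ν) * t ^ (ν - 1) = 1 := by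
    rw [← Real.rpow_add ht0, sub_add_sub_cancel, sub_self, Real.rpow_zero]
  refine ((Real.hasDerivAt_rpow_const (.inl ht0.ne')).mul deriv_primitive).congr_deriv ?_
  rw [Real.rpow_sub_one ht0.ne', radialFlux]
  linear_combination φ t * rpow_cancel

theorem radialFlux_pos (hν : 2 ≤ ν) (hR : 0 ≤ R)
    (hφint : IntegrableOn (fun s => s * φ s) (Ioi R)) (hφpos : ∀ s, R < s → 0 < φ s)
    {t : ℝ} (ht : R < t) : 0 < radialFlux ν R φ t :=
  mul_pos (Real.rpow_pos_of_pos (hR.trans_lt ht) _) <|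
    intervalIntegral.intervalIntegral_pos_of_pos_on
      (intervalIntegrable_rpow_mul hν hR hφint ht.le)
      (fun s hs => mul_pos (Real.rpow_pos_of_pos (hR.trans_lt hs.1) _) (hφpos s hs.1)) ht

/-- The integrand of the double integral `∫ t, ∫ s in R..t, t ^ (1 - ν) * s ^ (ν - 1) * φ s`, as a
function of `(t, s)` extended by zero to the whole quadrant. -/
noncomputable def fluxKernel (ν : ℝ) (φ : ℝ → ℝ) : ℝ × ℝ → ℝ :=
  {q | q.2 < q.1}.indicator fun q => q.1 ^ (1 - ν) * (q.2 ^ (ν - 1) * φ q.2)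

theorem fluxKernel_eq_indicator_Ioi (s : ℝ) :
    (fun t => fluxKernel ν φ (t, s)) =
      (Ioi s).indicator fun t => t ^ (1 - ν) * (s ^ (ν - 1) * φ s) := rfl

theorem fluxKernel_eq_indicator_Iio (t : ℝ) :
    (fun s => fluxKernel ν φ (t, s)) =
      (Iio t).indicator fun s => t ^ (1 - ν) * (s ^ (ν - 1) * φ s) := rfl

theorem aestronglyMeasurable_fluxKernel (hR : 0 ≤ R)
    (hφ : IntegrableOn (fun s => s * φ s) (Ioi R)) :
    AEStronglyMeasurable (fluxKernel ν φ)
      ((volume.restrict (Ioi R)).prod (volume.restrict (Ioi R))) := by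
  have hφ' : AEStronglyMeasurable (fun s => s ^ (ν - 1) * φ s) (volume.restrict (Ioi R)) := by
    refine ((measurable_id.pow_const (ν - 2)).aestronglyMeasurable.mul
      hφ.aestronglyMeasurable).congr ?_
    filter_upwards [ae_restrict_mem measurableSet_Ioi] with s hs
    exact rpow_sub_two_mul_self_mul (hR.trans_lt hs).ne' (φ s)
  exact (((measurable_fst.pow_const _).aestronglyMeasurable).mul hφ'.comp_snd).indicator
    (measurableSet_lt measurable_snd measurable_fst)

theorem integral_norm_fluxKernel (hν : 2 < ν) (hR : 0 ≤ R) {s : ℝ} (hs : R < s) :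
    ∫ t in Ioi R, ‖fluxKernel ν φ (t, s)‖ = (ν - 2)⁻¹ * ‖s * φ s‖ := by
  have hs0 : 0 < s := hR.trans_lt hs
  have rpow_cancel : s ^ (1 - ν + 1) * s ^ (ν - 1) = s := by
    rw [← Real.rpow_add hs0]
    ring_nf
    exact Real.rpow_one s
  calc ∫ t in Ioi R, ‖fluxKernel ν φ (t, s)‖
      = ∫ t in Ioi s, ‖t ^ (1 - ν) * (s ^ (ν - 1) * φ s)‖ := by
        simp_rw [congrFun (fluxKernel_eq_indicator_Ioi s), norm_indicator_eq_indicator_norm]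
        rw [setIntegral_indicator measurableSet_Ioi, inter_eq_right.2 (Ioi_subset_Ioi hs.le)]
    _ = ∫ t in Ioi s, t ^ (1 - ν) * (s ^ (ν - 1) * ‖φ s‖) :=
        setIntegral_congr_fun measurableSet_Ioi fun t ht => by
          simp only [norm_mul, Real.norm_of_nonneg (Real.rpow_nonneg hs0.le _),
            Real.norm_of_nonneg (Real.rpow_nonneg (hs0.trans ht).le _)]
    _ = -s ^ (1 - ν + 1) / (1 - ν + 1) * (s ^ (ν - 1) * ‖φ s‖) := by
        rw [integral_mul_const, integral_Ioi_rpow_of_lt (by linarith) hs0]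
    _ = (ν - 2)⁻¹ * (s ^ (1 - ν + 1) * s ^ (ν - 1) * ‖φ s‖) := by
        rw [show 1 - ν + 1 = -(ν - 2) by ring, neg_div_neg_eq]
        ring
    _ = (ν - 2)⁻¹ * ‖s * φ s‖ := by rw [rpow_cancel, norm_mul, Real.norm_of_nonneg hs0.le]

theorem integrable_fluxKernel (hν : 2 < ν) (hR : 0 ≤ R)
    (hφ : IntegrableOn (fun s => s * φ s) (Ioi R)) :
    Integrable (fluxKernel ν φ) ((volume.restrict (Ioi R)).prod (volume.restrict (Ioi R))) := by
  refine (integrable_prod_iff' (aestronglyMeasurable_fluxKernel hR hφ)).2 ⟨?_, ?_⟩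
  · filter_upwards [ae_restrict_mem measurableSet_Ioi] with s hs
    rw [fluxKernel_eq_indicator_Ioi, integrable_indicator_iff measurableSet_Ioi]
    have hν' : 1 - ν < -1 := by linarith
    exact IntegrableOn.mono_measure
      ((integrableOn_Ioi_rpow_of_lt hν' (hR.trans_lt hs)).mul_const _) Measure.restrict_le_self
  · refine (hφ.norm.const_mul (ν - 2)⁻¹).congr ?_
    filter_upwards [ae_restrict_mem measurableSet_Ioi] with s hs
    exact (integral_norm_fluxKernel hν hR hs).symm

theorem integrableOn_radialFlux (hν : 2 < ν) (hR : 0 ≤ R)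
    (hφ : IntegrableOn (fun s => s * φ s) (Ioi R)) : IntegrableOn (radialFlux ν R φ) (Ioi R) := by
  refine (integrable_fluxKernel hν hR hφ).integral_prod_left.congr ?_
  filter_upwards [ae_restrict_mem measurableSet_Ioi] with t ht
  rw [fluxKernel_eq_indicator_Iio, setIntegral_indicator measurableSet_Iio, Ioi_inter_Iio,
    integral_const_mul, ← integral_Ioc_eq_integral_Ioo, ← intervalIntegral.integral_of_le ht.le,
    radialFlux]

theorem continuousOn_radialFlux (hν : 2 ≤ ν) (hR : 0 ≤ R) (hφcont : ContinuousOn φ (Ioi R))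
    (hφint : IntegrableOn (fun s => s * φ s) (Ioi R)) : ContinuousOn (radialFlux ν R φ) (Ioi R) :=
  fun _ ht => (hasDerivAt_radialFlux hν hR hφcont hφint ht).continuousAt.continuousWithinAt

theorem hasDerivAt_radialPotential (hν : 2 < ν) (hR : 0 ≤ R) (hφcont : ContinuousOn φ (Ioi R))
    (hφint : IntegrableOn (fun s => s * φ s) (Ioi R)) {r : ℝ} (hr : R < r) :
    HasDerivAt (radialPotential ν R φ) (-radialFlux ν R φ r) r :=
  hasDerivAt_integral_Ioi (integrableOn_radialFlux hν hR hφint)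
    (continuousOn_radialFlux hν.le hR hφcont hφint) hr

theorem contDiffOn_radialPotential (hν : 2 < ν) (hR : 0 ≤ R) (hφcont : ContinuousOn φ (Ioi R))
    (hφint : IntegrableOn (fun s => s * φ s) (Ioi R)) :
    ContDiffOn ℝ 2 (radialPotential ν R φ) (Ioi R) := by
  have hflux : ContinuousOn (radialFlux ν R φ) (Ioi R) :=
    continuousOn_radialFlux hν.le hR hφcont hφint
  have hflux' : ContinuousOn (fun t => φ t - (ν - 1) / t * radialFlux ν R φ t) (Ioi R) :=
    hφcont.sub <|
      (continuousOn_const.div continuousOn_id fun t ht => (hR.trans_lt ht).ne').mul hflux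
  have contDiffOn_flux : ContDiffOn ℝ (0 + 1) (radialFlux ν R φ) (Ioi R) :=
    contDiffOn_succ_of_hasDerivAt (by simp) isOpen_Ioi
      (fun t ht => hasDerivAt_radialFlux hν.le hR hφcont hφint ht) (contDiffOn_zero.2 hflux')
  rw [zero_add] at contDiffOn_flux
  exact one_add_one_eq_two (R := WithTop ℕ∞) ▸
    contDiffOn_succ_of_hasDerivAt (by simp) isOpen_Ioi
      (fun t ht => hasDerivAt_radialPotential hν hR hφcont hφint ht) contDiffOn_flux.neg

theorem radialPotential_pos (hν : 2 < ν) (hR : 0 ≤ R)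
    (hφint : IntegrableOn (fun s => s * φ s) (Ioi R)) (hφpos : ∀ s, R < s → 0 < φ s)
    {r : ℝ} (hr : R ≤ r) : 0 < radialPotential ν R φ r :=
  integral_Ioi_pos ((integrableOn_radialFlux hν hR hφint).mono_set (Ioi_subset_Ioi hr))
    fun _ ht => radialFlux_pos hν.le hR hφint hφpos (hr.trans_lt ht)

theorem tendsto_radialPotential_atTop : Tendsto (radialPotential ν R φ) atTop (𝓝 0) :=
  tendsto_integral_Ioi_zero tendsto_id

end RadialPotential

section SingularTransform

/-- The solution `F` of `F' = F ^ (-p)`, `F 0 = 0`, which for `p ≥ 0` turns a positive solution `v`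
of `-Δv = φ` into a supersolution `F ∘ v` of `-Δu = φ * u ^ (-p)`. -/
noncomputable def singularTransform (p y : ℝ) : ℝ := ((p + 1) * y) ^ (1 / (p + 1))

variable {p y : ℝ}

theorem singularTransform_pos (hp : -1 < p) (hy : 0 < y) : 0 < singularTransform p y :=
  Real.rpow_pos_of_pos (mul_pos (by linarith) hy) _

theorem hasDerivAt_singularTransform (hp : -1 < p) (hy : 0 < y) :
    HasDerivAt (singularTransform p) (singularTransform p y ^ (-p)) y := by
  have hp' : 0 < p + 1 := by linarith
  have hbase : 0 < (p + 1) * y := mul_pos hp' hy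
  refine (((hasDerivAt_id y).const_mul (p + 1)).rpow_const (.inl hbase.ne')).congr_deriv ?_
  simp only [id, singularTransform]
  rw [← Real.rpow_mul hbase.le, show 1 / (p + 1) * -p = 1 / (p + 1) - 1 by field_simp; ring]
  field_simp

theorem hasDerivAt_singularTransform_rpow_neg (hp : -1 < p) (hy : 0 < y) :
    HasDerivAt (fun y => singularTransform p y ^ (-p))
      (-(p * singularTransform p y ^ (-(2 * p + 1)))) y := by
  have hpos : 0 < singularTransform p y := singularTransform_pos hp hy
  refine ((hasDerivAt_singularTransform hp hy).rpow_const (.inl hpos.ne')).congr_deriv ?_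
  rw [show -(2 * p + 1) = -p + (-p - 1) by ring, Real.rpow_add hpos]
  ring

theorem tendsto_singularTransform_zero (hp : -1 < p) :
    Tendsto (singularTransform p) (𝓝 0) (𝓝 0) := by
  have hexp : 0 < 1 / (p + 1) := one_div_pos.2 (by linarith)
  have hcont : Continuous (singularTransform p) :=
    (continuous_const.mul continuous_id).rpow_const fun _ => .inr hexp.le
  have hzero : singularTransform p 0 = 0 := by
    rw [singularTransform, mul_zero, Real.zero_rpow hexp.ne']
  simpa only [hzero] using hcont.tendsto 0

theorem contDiffOn_singularTransform {n : WithTop ℕ∞} (hp : -1 < p) :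
    ContDiffOn ℝ n (singularTransform p) (Ioi 0) :=
  (contDiffOn_const.mul contDiffOn_id).rpow_const_of_ne fun _ hy =>
    (mul_pos (by linarith) hy).ne'

variable {E : Type*} [NormedAddCommGroup E] [InnerProductSpace ℝ E] [FiniteDimensional ℝ E]

theorem mul_rpow_neg_le_neg_laplacian_singularTransform (hp : 0 ≤ p) {v : E → ℝ} {x : E}
    (hv : ContDiffAt ℝ 2 v x) (hpos : 0 < v x) :
    -Δ v x * singularTransform p (v x) ^ (-p) ≤ -Δ (fun y => singularTransform p (v y)) x := by
  have hp' : -1 < p := by linarith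
  have chain_rule := laplacian_comp hv
    ((lt_mem_nhds hpos).mono fun y hy => hasDerivAt_singularTransform hp' hy)
    (hasDerivAt_singularTransform_rpow_neg hp' hpos)
  have concave : 0 ≤ p * singularTransform p (v x) ^ (-(2 * p + 1)) * ‖fderiv ℝ v x‖ ^ 2 := by
    have := singularTransform_pos hp' hpos
    positivity
  linarith

end SingularTransform

section RadialSolution

variable {E : Type*} [NormedAddCommGroup E] [InnerProductSpace ℝ E] {R : ℝ} {φ : ℝ → ℝ}

theorem contDiffOn_radialPotential_norm {ν : ℝ} (hν : 2 < ν) (hR : 0 ≤ R)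
    (hφcont : ContinuousOn φ (Ioi R)) (hφint : IntegrableOn (fun s => s * φ s) (Ioi R)) :
    ContDiffOn ℝ 2 (fun x : E => radialPotential ν R φ ‖x‖) {x | R < ‖x‖} :=
  (contDiffOn_radialPotential hν hR hφcont hφint).comp
    (contDiffOn_id.norm ℝ fun _ hx => norm_pos_iff.1 (hR.trans_lt hx)) fun _ hx => hx

theorem neg_laplacian_radialPotential_norm [FiniteDimensional ℝ E] {N : ℕ}
    (hE : finrank ℝ E = N) (hN : 2 < N) (hR : 0 ≤ R) (hφcont : ContinuousOn φ (Ioi R))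
    (hφint : IntegrableOn (fun s => s * φ s) (Ioi R)) {x : E} (hx : R < ‖x‖) :
    -Δ (fun y : E => radialPotential N R φ ‖y‖) x = φ ‖x‖ := by
  have hN' : (2 : ℝ) < N := by exact_mod_cast hN
  rw [laplacian_comp_norm (norm_pos_iff.1 (hR.trans_lt hx))
    ((lt_mem_nhds hx).mono fun r hr => hasDerivAt_radialPotential hN' hR hφcont hφint hr)
    (hasDerivAt_radialFlux hN'.le hR hφcont hφint hx).neg, hE]
  ring

end RadialSolution

theorem statement_19_general {E : Type*} [NormedAddCommGroup E] [InnerProductSpace ℝ E]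
    [FiniteDimensional ℝ E] {N : ℕ} (hE : finrank ℝ E = N) (hN : 3 ≤ N) {p R : ℝ} (hp : 0 ≤ p)
    (hR : 0 ≤ R) {φ : ℝ → ℝ} (hφcont : ContinuousOn φ (Ioi R)) (hφpos : ∀ r, R < r → 0 < φ r)
    (hφint : IntegrableOn (fun r => r * φ r) (Ioi R)) :
    (∀ r, R ≤ r →
      IntegrableOn (radialFlux N R φ) (Ioi r) ∧ 0 < radialPotential N R φ r) ∧
    ContDiffOn ℝ 2 (fun x : E => singularTransform p (radialPotential N R φ ‖x‖))
      {x | R < ‖x‖} ∧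
    (∀ x : E, R < ‖x‖ →
      0 < singularTransform p (radialPotential N R φ ‖x‖) ∧
      φ ‖x‖ * singularTransform p (radialPotential N R φ ‖x‖) ^ (-p) ≤
        -Δ (fun y : E => singularTransform p (radialPotential N R φ ‖y‖)) x) ∧
    Tendsto (fun x : E => singularTransform p (radialPotential N R φ ‖x‖))
      (cocompact E) (𝓝 0) := by
  have hp' : -1 < p := by linarith
  have hN' : (2 : ℝ) < N := by exact_mod_cast hN
  have hpos {r : ℝ} (hr : R ≤ r) : 0 < radialPotential N R φ r :=
    radialPotential_pos hN' hR hφint hφpos hr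
  have hC2 : ContDiffOn ℝ 2 (fun x : E => radialPotential N R φ ‖x‖) {x | R < ‖x‖} :=
    contDiffOn_radialPotential_norm hN' hR hφcont hφint
  refine ⟨fun r hr => ⟨?_, hpos hr⟩, ?_, fun x hx => ⟨?_, ?_⟩, ?_⟩
  · exact (integrableOn_radialFlux hN' hR hφint).mono_set (Ioi_subset_Ioi hr)
  · exact (contDiffOn_singularTransform hp').comp hC2 fun x hx => hpos (le_of_lt hx)
  · exact singularTransform_pos hp' (hpos hx.le)
  · rw [← neg_laplacian_radialPotential_norm hE hN hR hφcont hφint hx]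
    exact mul_rpow_neg_le_neg_laplacian_singularTransform hp
      (hC2.contDiffAt ((isOpen_lt continuous_const continuous_norm).mem_nhds hx)) (hpos hx.le)
  · exact (tendsto_singularTransform_zero hp').comp
      (tendsto_radialPotential_atTop.comp (tendsto_norm_cocompact_atTop (E := E)))

theorem laplacian_eq_innerProductSpace_laplacian {N : ℕ} (u : EuclideanSpace ℝ (Fin N) → ℝ) :
    laplacian u = Δ u := by
  rw [InnerProductSpace.laplacian_eq_iteratedFDeriv_orthonormalBasis u
    (EuclideanSpace.basisFun (Fin N) ℝ)]
  funext x
  simp only [laplacian, EuclideanSpace.basisFun_apply]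

/-- The construction in the proof of Theorem 4.1: `u(x) = ((p+1) D(|x|))^{1/(p+1)}` is
a positive `C²` supersolution of `-Δu ≥ φ(|x|) u^{-p}` outside the unit ball, tending to
zero at infinity. -/
theorem statement_19 {N : ℕ} (hN : 3 ≤ N) (p : ℝ) (hp : 0 < p) (φ : ℝ → ℝ)
    (hφcont : ContinuousOn φ (Ioi (0:ℝ))) (hφpos : ∀ r : ℝ, 0 < r → 0 < φ r)
    (hφint : IntegrableOn (fun r : ℝ => r * φ r) (Ioi (1:ℝ)) volume) :
    (∀ r : ℝ, 1 ≤ r →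
      IntegrableOn
        (fun t : ℝ => t ^ (1 - (N:ℝ)) * ∫ s in (1:ℝ)..t, s ^ ((N:ℝ) - 1) * φ s)
        (Ioi r) volume ∧
      0 < ∫ t in Ioi r, t ^ (1 - (N:ℝ)) * ∫ s in (1:ℝ)..t, s ^ ((N:ℝ) - 1) * φ s) ∧
    ContDiffOn ℝ 2
      (fun x : EuclideanSpace ℝ (Fin N) =>
        ((p + 1) * ∫ t in Ioi ‖x‖, t ^ (1 - (N:ℝ)) *
            ∫ s in (1:ℝ)..t, s ^ ((N:ℝ) - 1) * φ s) ^ (1 / (p + 1)))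
      {x : EuclideanSpace ℝ (Fin N) | 1 < ‖x‖} ∧
    (∀ x : EuclideanSpace ℝ (Fin N), 1 < ‖x‖ →
      0 < ((p + 1) * ∫ t in Ioi ‖x‖, t ^ (1 - (N:ℝ)) *
            ∫ s in (1:ℝ)..t, s ^ ((N:ℝ) - 1) * φ s) ^ (1 / (p + 1)) ∧
      φ ‖x‖ * (((p + 1) * ∫ t in Ioi ‖x‖, t ^ (1 - (N:ℝ)) *
            ∫ s in (1:ℝ)..t, s ^ ((N:ℝ) - 1) * φ s) ^ (1 / (p + 1))) ^ (-p) ≤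
        -laplacian
          (fun x : EuclideanSpace ℝ (Fin N) =>
            ((p + 1) * ∫ t in Ioi ‖x‖, t ^ (1 - (N:ℝ)) *
                ∫ s in (1:ℝ)..t, s ^ ((N:ℝ) - 1) * φ s) ^ (1 / (p + 1))) x) ∧
    Tendsto
      (fun x : EuclideanSpace ℝ (Fin N) =>
        ((p + 1) * ∫ t in Ioi ‖x‖, t ^ (1 - (N:ℝ)) *
            ∫ s in (1:ℝ)..t, s ^ ((N:ℝ) - 1) * φ s) ^ (1 / (p + 1)))
      (Filter.cocompact (EuclideanSpace ℝ (Fin N))) (nhds 0) := by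
  simp only [laplacian_eq_innerProductSpace_laplacian]
  exact statement_19_general finrank_euclideanSpace_fin hN hp.le zero_le_one
    (hφcont.mono (Ioi_subset_Ioi zero_le_one)) (fun r hr => hφpos r (one_pos.trans hr)) hφint
end
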